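/- Let p ∈ (1,∞) and let μ be a probability measure on ℝ^d, absolutely continuous with respect to Lebesgue measure, with finite p-th moment. Let f : ℝ^d → ℝ be continuous with f(x) ≤ c(1+|x|^p). Then sup{∫ f dν : W_p(μ,ν) ≤ δ} = sup{∫ f dν : W_p(μ,ν) ≤ δ, ν ≪ Lebesgue}. -/

import Mathlib

open Set MeasureTheory Filter Topology
open scoped ENNReal RealInnerProductSpace

/-- The `p`-Wasserstein distance on `ℝ^d` with respect to the Euclidean norm. -/
noncomputable def Wp {d : ℕ} (p : ℝ)
    (μ ν : Measure (EuclideanSpace ℝ (Fin d))) : ℝ≥0∞ :=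
  ⨅ π ∈ {π : Measure (EuclideanSpace ℝ (Fin d) × EuclideanSpace ℝ (Fin d)) |
      π.map Prod.fst = μ ∧ π.map Prod.snd = ν},
    (∫⁻ z, ENNReal.ofReal (‖z.1 - z.2‖ ^ p) ∂π) ^ (1 / p)

/-- The `p`-th power transport cost of a measure on a product. -/
noncomputable def transportCost {E : Type*} [NormedAddCommGroup E] [MeasurableSpace E] (p : ℝ)
    (π : Measure (E × E)) : ℝ≥0∞ :=
  ∫⁻ z, ENNReal.ofReal (‖z.1 - z.2‖ ^ p) ∂π

section

variable {E : Type*} [NormedAddCommGroup E]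

lemma exists_continuous_oscillation_radius (f : E → ℝ) (hf : Continuous f) {ε : ℝ} (hε : 0 < ε) :
    ∃ r : C(E, ℝ), ∀ x, 0 < r x ∧ r x ≤ ε ∧ ∀ y, ‖y - x‖ ≤ r x → |f y - f x| ≤ ε := by
  refine exists_continuous_forall_mem_convex_of_local_const
    (t := fun x => {r : ℝ | 0 < r ∧ r ≤ ε ∧ ∀ y, ‖y - x‖ ≤ r → |f y - f x| ≤ ε}) ?_ ?_
  · intro x
    refine Set.OrdConnected.convex ⟨?_⟩
    rintro a ⟨ha, -, -⟩ b ⟨-, hb, hb'⟩ s ⟨has, hsb⟩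
    exact ⟨ha.trans_le has, hsb.trans hb, fun y hy => hb' y (hy.trans hsb)⟩
  · intro x
    obtain ⟨η, hη, h⟩ := Metric.continuous_iff.1 hf x (ε / 2) (by positivity)
    refine ⟨min ε (η / 3), ?_⟩
    filter_upwards [Metric.ball_mem_nhds x (show 0 < η / 3 by positivity)] with y hy
    refine ⟨by positivity, min_le_left _ _, fun z hz => ?_⟩
    have hy' := Metric.mem_ball.1 hy
    have hz' : dist z y ≤ η / 3 := by
      rw [dist_eq_norm]; exact hz.trans (min_le_right _ _)
    have h1 := h y (by linarith)
    have h2 := h z (by linarith [dist_triangle z y x])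
    rw [Real.dist_eq] at h1 h2
    have h3 := abs_sub_le (f z) (f x) (f y)
    rw [abs_sub_comm (f x) (f y)] at h3
    linarith

variable [MeasurableSpace E] [BorelSpace E]

lemma measure_le_of_small_transportCost {p : ℝ} (hp : 0 < p) {μ ν : Measure E} [IsFiniteMeasure μ]
    [SecondCountableTopology E]
    (h : ∀ η : ℝ≥0∞, 0 < η → ∃ π : Measure (E × E),
      π.map Prod.fst = μ ∧ π.map Prod.snd = ν ∧ transportCost p π ≤ η)
    {F : Set E} (hF : IsClosed F) : ν F ≤ μ F := by
  have key : ∀ ε : ℝ, 0 < ε → ν F ≤ μ (Metric.cthickening ε F) := by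
    intro ε hε
    have hεp : ENNReal.ofReal (ε ^ p) ≠ 0 := by
      simpa using Real.rpow_pos_of_pos hε p
    refine ENNReal.le_of_forall_pos_le_add fun η hη _ => ?_
    obtain ⟨π, hπ1, hπ2, hc⟩ := h (η * ENNReal.ofReal (ε ^ p)) (by positivity)
    have hbad : π {z | ENNReal.ofReal (ε ^ p) ≤ ENNReal.ofReal (‖z.1 - z.2‖ ^ p)} ≤ η := by
      refine (meas_ge_le_lintegral_div (by fun_prop) hεp ENNReal.ofReal_ne_top).trans ?_
      exact ENNReal.div_le_of_le_mul hc
    rw [← hπ1, ← hπ2, Measure.map_apply measurable_snd hF.measurableSet,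
      Measure.map_apply measurable_fst Metric.isClosed_cthickening.measurableSet]
    refine (measure_mono ?_).trans ((measure_union_le _ _).trans (add_le_add_right hbad _))
    rintro ⟨x, y⟩ hy
    by_cases hxy : ‖x - y‖ ≤ ε
    · left
      exact Metric.mem_cthickening_of_dist_le x y ε F hy (by rwa [dist_eq_norm])
    · right
      exact ENNReal.ofReal_le_ofReal (Real.rpow_le_rpow hε.le (not_le.1 hxy).le hp.le)
  have ht := tendsto_measure_cthickening_of_isClosed (μ := μ)
    ⟨1, one_pos, measure_ne_top _ _⟩ hF
  refine ge_of_tendsto (ht.mono_left (nhdsWithin_le_nhds (s := Ioi 0))) ?_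
  filter_upwards [self_mem_nhdsWithin] with ε hε using key ε hε

lemma eq_of_small_transportCost {p : ℝ} (hp : 0 < p) {μ ν : Measure E} [IsProbabilityMeasure μ]
    [IsProbabilityMeasure ν] [SecondCountableTopology E]
    (h : ∀ η : ℝ≥0∞, 0 < η → ∃ π : Measure (E × E),
      π.map Prod.fst = μ ∧ π.map Prod.snd = ν ∧ transportCost p π ≤ η) : μ = ν := by
  refine Measure.eq_of_le_of_isProbabilityMeasure (Measure.le_iff'.2 fun s => ?_)
  rw [s.measure_eq_iInf_isOpen ν]
  refine le_iInf₂ fun U hU => le_iInf fun hUo => (measure_mono hU).trans ?_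
  have := measure_le_of_small_transportCost hp h hUo.isClosed_compl
  rw [prob_compl_eq_one_sub hUo.measurableSet, prob_compl_eq_one_sub hUo.measurableSet] at this
  exact (ENNReal.sub_le_sub_iff_left prob_le_one ENNReal.one_ne_top).1 this

variable [NormedSpace ℝ E] [FiniteDimensional ℝ E]

lemma exists_smoothing (p : ℝ) (hp : 1 ≤ p) (vol : Measure E) [vol.IsAddHaarMeasure]
    (f : E → ℝ) (hf : Continuous f)
    (π : Measure (E × E)) [IsProbabilityMeasure π] {ε : ℝ} (hε : 0 < ε) :
    ∃ π' : Measure (E × E), IsProbabilityMeasure π' ∧ π'.map Prod.fst = π.map Prod.fst ∧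
      π'.map Prod.snd ≪ vol ∧
      (Integrable f (π'.map Prod.snd) ↔ Integrable f (π.map Prod.snd)) ∧
      |∫ x, f x ∂(π'.map Prod.snd) - ∫ x, f x ∂(π.map Prod.snd)| ≤ ε ∧
      transportCost p π' ^ (1 / p) ≤ transportCost p π ^ (1 / p) + ENNReal.ofReal ε := by
  obtain ⟨r, hr⟩ := exists_continuous_oscillation_radius f hf hε
  have hp0 : 0 < p := by linarith
  set B : Set E := Metric.closedBall 0 1
  set lam : Measure E := ProbabilityTheory.cond vol B
  have hBfin : vol B ≠ ∞ := (isCompact_closedBall (0 : E) 1).measure_lt_top.ne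
  have : IsProbabilityMeasure lam :=
    ProbabilityTheory.cond_isProbabilityMeasure_of_finite
      (Metric.measure_closedBall_pos vol 0 one_pos).ne' hBfin
  have hlam : lam ≪ vol := ProbabilityTheory.cond_absolutelyContinuous
  have hlamB : ∀ᵐ u ∂lam, ‖u‖ ≤ 1 := by
    filter_upwards [ProbabilityTheory.ae_cond_mem (μ := vol) (s := B) measurableSet_closedBall]
      with u hu
    simpa [B] using hu
  set P := π.prod lam
  have hPB : ∀ᵐ z ∂P, ‖z.2‖ ≤ 1 := Measure.quasiMeasurePreserving_snd.ae hlamB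
  set Y : (E × E) × E → E := fun z => z.1.2 + r z.1.2 • z.2
  have hY : Measurable Y := by
    have : Continuous Y := by fun_prop
    exact this.measurable
  have hYdist : ∀ᵐ z ∂P, ‖Y z - z.1.2‖ ≤ r z.1.2 := by
    filter_upwards [hPB] with z hz
    have h0 := (hr z.1.2).1
    simp only [Y, add_sub_cancel_left, norm_smul, Real.norm_eq_abs, abs_of_pos h0]
    nlinarith
  have hYf : ∀ᵐ z ∂P, ‖f (Y z) - f z.1.2‖ ≤ ε := by
    filter_upwards [hYdist] with z hz using (hr z.1.2).2.2 _ hz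
  set G : (E × E) × E → E × E := fun z => (z.1.1, Y z)
  have hG : Measurable G := by fun_prop
  have hmap1 : (P.map G).map Prod.fst = π.map Prod.fst := by
    have hπ : π = P.map Prod.fst := by simp [P, Measure.map_fst_prod]
    conv_rhs => rw [hπ]
    rw [Measure.map_map measurable_fst hG, Measure.map_map measurable_fst measurable_fst]
    rfl
  have hmap2 : (P.map G).map Prod.snd = P.map Y := by
    rw [Measure.map_map measurable_snd hG]; rfl
  have hmap0 : π.map Prod.snd = P.map (fun z => z.1.2) := by
    have hπ : π = P.map Prod.fst := by simp [P, Measure.map_fst_prod]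
    conv_lhs => rw [hπ]
    rw [Measure.map_map measurable_snd measurable_fst]
    rfl
  have hdiff : Integrable (fun z => f (Y z) - f z.1.2) P := by
    refine Integrable.of_bound ?_ ε hYf
    exact ((hf.measurable.comp hY).sub
      (hf.measurable.comp (measurable_snd.comp measurable_fst))).aestronglyMeasurable
  have hiff : Integrable (fun z => f (Y z)) P ↔ Integrable (fun z => f z.1.2) P := by
    constructor
    · intro h
      refine (h.sub hdiff).congr (Eventually.of_forall fun z => ?_)
      simp
    · intro h
      refine (hdiff.add h).congr (Eventually.of_forall fun z => ?_)
      simp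
  have hint0 : ∫ x, f x ∂(π.map Prod.snd) = ∫ z, f z.1.2 ∂P := by
    rw [hmap0, integral_map (by fun_prop) hf.aestronglyMeasurable]
  have hint1 : ∫ x, f x ∂(P.map Y) = ∫ z, f (Y z) ∂P := by
    rw [integral_map (by fun_prop) hf.aestronglyMeasurable]
  refine ⟨P.map G, Measure.isProbabilityMeasure_map hG.aemeasurable, hmap1, ?_, ?_, ?_, ?_⟩
  · rw [hmap2]
    refine Measure.AbsolutelyContinuous.mk fun s hs h0 => ?_
    rw [Measure.map_apply hY hs, Measure.measure_prod_null (hY hs)]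
    refine Eventually.of_forall fun z => hlam ?_
    have : Prod.mk z ⁻¹' (Y ⁻¹' s) = (fun u : E => r z.2 • u) ⁻¹' ((fun u => z.2 + u) ⁻¹' s) := rfl
    rw [this, Measure.addHaar_preimage_smul vol (hr z.2).1.ne', measure_preimage_add, h0, mul_zero]
  · rw [hmap2, hmap0, integrable_map_measure hf.aestronglyMeasurable (by fun_prop),
      integrable_map_measure hf.aestronglyMeasurable (by fun_prop)]
    exact hiff
  · rw [hmap2, hint0, hint1]
    by_cases hi : Integrable (fun z => f z.1.2) P
    · rw [← integral_sub (hiff.2 hi) hi, ← Real.norm_eq_abs]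
      simpa using norm_integral_le_of_norm_le_const hYf
    · rw [integral_undef hi, integral_undef (fun h => hi (hiff.1 h))]
      simpa using hε.le
  · have e1 : transportCost p (P.map G) = ∫⁻ z, ENNReal.ofReal ‖z.1.1 - Y z‖ ^ p ∂P := by
      rw [transportCost, lintegral_map (by fun_prop) hG]
      exact lintegral_congr fun z =>
        (ENNReal.ofReal_rpow_of_nonneg (norm_nonneg _) hp0.le).symm
    have e2 : transportCost p π = ∫⁻ z, ENNReal.ofReal ‖z.1.1 - z.1.2‖ ^ p ∂P := by
      have hπ : π = P.map Prod.fst := by simp [P, Measure.map_fst_prod]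
      conv_lhs => rw [hπ]
      rw [transportCost, lintegral_map (by fun_prop) measurable_fst]
      exact lintegral_congr fun z =>
        (ENNReal.ofReal_rpow_of_nonneg (norm_nonneg _) hp0.le).symm
    have hle : transportCost p (P.map G) ≤
        ∫⁻ z, ((fun z : (E × E) × E => ENNReal.ofReal ‖z.1.1 - z.1.2‖) +
          (fun _ => ENNReal.ofReal ε : (E × E) × E → ℝ≥0∞)) z ^ p ∂P := by
      rw [e1]
      refine lintegral_mono_ae ?_
      filter_upwards [hYdist] with z hz
      refine ENNReal.rpow_le_rpow ?_ hp0.le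
      rw [Pi.add_apply, ← ENNReal.ofReal_add (norm_nonneg _) hε.le]
      refine ENNReal.ofReal_le_ofReal ?_
      have := norm_sub_le_norm_sub_add_norm_sub z.1.1 z.1.2 (Y z)
      rw [norm_sub_rev z.1.2] at this
      linarith [(hr z.1.2).2.1]
    refine (ENNReal.rpow_le_rpow hle (by positivity)).trans ?_
    refine (ENNReal.lintegral_Lp_add_le (by fun_prop) (by fun_prop) hp).trans ?_
    rw [← e2]
    simp [← ENNReal.rpow_mul, mul_inv_cancel₀ hp0.ne']

lemma exists_bounded_transport (p : ℝ) (hp : 0 < p) (μ : Measure E) [IsProbabilityMeasure μ]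
    (hmom : Integrable (fun x => ‖x‖ ^ p) μ) (f : E → ℝ) (hf : Continuous f)
    {η : ℝ≥0∞} (hη : 0 < η) :
    ∃ π : Measure (E × E), IsProbabilityMeasure π ∧ π.map Prod.fst = μ ∧
      Integrable f (π.map Prod.snd) ∧ transportCost p π < η := by
  have hlim : Tendsto (fun n : ℕ => ∫⁻ x, ({x : E | (n : ℝ) < ‖x‖}).indicator
      (fun x => ENNReal.ofReal (‖x‖ ^ p)) x ∂μ) atTop (𝓝 (∫⁻ _, 0 ∂μ)) := by
    refine tendsto_lintegral_of_dominated_convergence (fun x => ENNReal.ofReal (‖x‖ ^ p))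
      ?_ ?_ ?_ ?_
    · intro n
      exact Measurable.indicator (by fun_prop) (measurableSet_lt measurable_const measurable_norm)
    · exact fun n => Eventually.of_forall fun x => indicator_le_self _ _ x
    · exact hmom.lintegral_lt_top.ne
    · refine Eventually.of_forall fun x => tendsto_const_nhds.congr' ?_
      filter_upwards [eventually_ge_atTop ⌈‖x‖⌉₊] with n hn
      rw [indicator_of_notMem]
      exact not_lt.2 (Nat.ceil_le.1 hn)
  rw [lintegral_zero] at hlim
  obtain ⟨n, hn⟩ := (hlim.eventually_lt_const hη).exists
  set S : Set E := {x : E | (n : ℝ) < ‖x‖}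
  have hS : MeasurableSet S := measurableSet_lt measurable_const measurable_norm
  set T : E → E := Sᶜ.indicator id
  have hT : Measurable T := measurable_id.indicator hS.compl
  have hTn : ∀ x, T x ∈ Metric.closedBall (0 : E) n := by
    intro x
    by_cases hx : x ∈ S
    · simp [T, hx]
    · simpa [T, hx] using not_lt.1 hx
  have hG : Measurable fun x => (x, T x) := by fun_prop
  refine ⟨μ.map fun x => (x, T x), Measure.isProbabilityMeasure_map hG.aemeasurable, ?_, ?_, ?_⟩
  · rw [Measure.map_map measurable_fst hG]; exact Measure.map_id
  · rw [Measure.map_map measurable_snd hG,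
      integrable_map_measure hf.aestronglyMeasurable (by fun_prop)]
    obtain ⟨C, hC⟩ := (isCompact_closedBall (0 : E) n).exists_bound_of_continuousOn hf.continuousOn
    exact Integrable.of_bound (hf.measurable.comp hT).aestronglyMeasurable C
      (Eventually.of_forall fun x => hC _ (hTn x))
  · rw [transportCost, lintegral_map (by fun_prop) hG]
    refine lt_of_eq_of_lt (lintegral_congr fun x => ?_) hn
    by_cases hx : x ∈ S
    · simp [T, hx]
    · simp [T, hx, Real.zero_rpow hp.ne']

end

lemma Wp_le_of_coupling {d : ℕ} {p : ℝ} (hp : 0 < p) {δ : ℝ} (hδ : 0 ≤ δ)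
    (π : Measure (EuclideanSpace ℝ (Fin d) × EuclideanSpace ℝ (Fin d)))
    (h : transportCost p π ≤ ENNReal.ofReal (δ ^ p)) :
    Wp p (π.map Prod.fst) (π.map Prod.snd) ≤ ENNReal.ofReal δ := by
  refine (iInf₂_le π ⟨rfl, rfl⟩).trans ?_
  refine (ENNReal.rpow_le_rpow h (by positivity)).trans_eq ?_
  rw [ENNReal.ofReal_rpow_of_nonneg (by positivity) (by positivity), ← Real.rpow_mul hδ,
    mul_one_div_cancel hp.ne', Real.rpow_one]

lemma exists_coupling_of_Wp_lt {d : ℕ} {p : ℝ} {μ ν : Measure (EuclideanSpace ℝ (Fin d))}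
    {a : ℝ≥0∞} (h : Wp p μ ν < a) :
    ∃ π : Measure (EuclideanSpace ℝ (Fin d) × EuclideanSpace ℝ (Fin d)),
      π.map Prod.fst = μ ∧ π.map Prod.snd = ν ∧ transportCost p π ^ (1 / p) < a := by
  simp only [Wp, iInf_lt_iff] at h
  obtain ⟨π, ⟨h1, h2⟩, h3⟩ := h
  exact ⟨π, h1, h2, h3⟩

lemma eq_of_Wp_eq_zero {d : ℕ} {p : ℝ} (hp : 0 < p) {μ ν : Measure (EuclideanSpace ℝ (Fin d))}
    [IsProbabilityMeasure μ] [IsProbabilityMeasure ν] (h : Wp p μ ν = 0) : μ = ν := by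
  refine eq_of_small_transportCost hp fun η hη => ?_
  obtain ⟨π, h1, h2, h3⟩ := exists_coupling_of_Wp_lt (a := η ^ (1 / p))
    (h.trans_lt (ENNReal.rpow_pos_of_nonneg hη (by positivity)))
  exact ⟨π, h1, h2, ((ENNReal.rpow_lt_rpow_iff (by positivity)).1 h3).le⟩

lemma exists_absolutelyContinuous_integral_near {d : ℕ} {p : ℝ} (hp : 1 < p)
    (μ : Measure (EuclideanSpace ℝ (Fin d))) [IsProbabilityMeasure μ]
    (hmom : Integrable (fun x => ‖x‖ ^ p) μ)
    (f : EuclideanSpace ℝ (Fin d) → ℝ) (hf : Continuous f) {δ : ℝ} (hδ : 0 < δ)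
    (ν : Measure (EuclideanSpace ℝ (Fin d))) [IsProbabilityMeasure ν]
    (hν : Wp p μ ν ≤ ENNReal.ofReal δ) {η : ℝ} (hη : 0 < η) :
    ∃ ν' : Measure (EuclideanSpace ℝ (Fin d)), IsProbabilityMeasure ν' ∧
      Wp p μ ν' ≤ ENNReal.ofReal δ ∧ ν' ≪ (volume : Measure (EuclideanSpace ℝ (Fin d))) ∧
      |∫ x, f x ∂ν' - ∫ x, f x ∂ν| ≤ η := by
  have hp0 : 0 < p := by linarith
  obtain ⟨π₀, hπ₀P, hπ₀1, hπ₀i, hπ₀c⟩ := exists_bounded_transport p hp0 μ hmom f hf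
    (η := ENNReal.ofReal ((δ / 4) ^ p)) (by simpa using Real.rpow_pos_of_pos (by positivity) p)
  obtain ⟨σ, hσP, hσ1, hσac, hσi, -, hσc⟩ :=
    exists_smoothing p hp.le volume f hf π₀ (show 0 < δ / 4 by positivity)
  replace hσi := hσi.2 hπ₀i
  replace hσ1 := hσ1.trans hπ₀1
  have root : ∀ {a : ℝ}, 0 ≤ a → ∀ {x : ℝ≥0∞}, x ^ (1 / p) ≤ ENNReal.ofReal a ↔
      x ≤ ENNReal.ofReal (a ^ p) := by
    intro a ha x
    rw [← ENNReal.ofReal_rpow_of_nonneg ha hp0.le, one_div, ENNReal.rpow_inv_le_iff hp0]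
  have hσcost : transportCost p σ ≤ ENNReal.ofReal ((δ / 2) ^ p) := by
    rw [← root (by positivity)]
    refine hσc.trans ((add_le_add_left ((root (by positivity)).2 hπ₀c.le) _).trans_eq ?_)
    rw [← ENNReal.ofReal_add (by positivity) (by positivity)]
    congr 1; ring
  set A := ∫ x, f x ∂(σ.map Prod.snd)
  set I := ∫ x, f x ∂ν
  obtain ⟨t, ht0, ht1, htη⟩ : ∃ t : ℝ, 0 < t ∧ t < 1 ∧ t * (|A| + |I| + 1) ≤ η / 2 := by
    refine ⟨min (1 / 2) (η / 2 / (|A| + |I| + 1)), by positivity,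
      (min_le_left _ _).trans_lt (by norm_num), ?_⟩
    rw [← le_div_iff₀ (by positivity)]
    exact min_le_right _ _
  obtain ⟨ε, hε0, hε1, hεη, hεδ⟩ : ∃ ε : ℝ, 0 < ε ∧ ε ≤ 1 ∧ ε ≤ η / 2 ∧
      (1 - t) * (δ + ε + ε) ^ p + t * (δ / 2) ^ p ≤ δ ^ p := by
    have hcont : ContinuousAt (fun ε : ℝ => (1 - t) * (δ + ε + ε) ^ p + t * (δ / 2) ^ p) 0 := by
      have : ContinuousAt (fun ε : ℝ => (δ + ε + ε) ^ p) 0 :=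
        ContinuousAt.rpow_const (by fun_prop) (Or.inr hp0.le)
      fun_prop
    have hlt : (1 - t) * (δ + 0 + 0) ^ p + t * (δ / 2) ^ p < δ ^ p := by
      have := Real.rpow_lt_rpow (by positivity) (half_lt_self hδ) hp0
      simp only [add_zero]
      nlinarith
    have hev := (hcont.tendsto.eventually_lt_const hlt).filter_mono
      (nhdsWithin_le_nhds (s := Ioi 0))
    obtain ⟨ε, h1, h2, h3⟩ := (hev.and ((eventually_mem_nhdsWithin (s := Ioi (0 : ℝ))).and
      (eventually_nhdsWithin_of_eventually_nhds (eventually_le_nhds (show (0 : ℝ) < min 1 (η / 2) by positivity))))).exists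
    exact ⟨ε, h2, le_trans h3 (min_le_left _ _), le_trans h3 (min_le_right _ _), h1.le⟩
  obtain ⟨π, hπ1, hπ2, hπc⟩ := exists_coupling_of_Wp_lt (a := ENNReal.ofReal (δ + ε))
    (hν.trans_lt ((ENNReal.ofReal_lt_ofReal_iff (by positivity)).2 (by linarith)))
  have : IsProbabilityMeasure π := by
    constructor
    rw [← preimage_univ (f := Prod.fst), ← Measure.map_apply measurable_fst MeasurableSet.univ,
      hπ1, measure_univ]
  obtain ⟨ρ, hρP, hρ1, hρac, hρi, hρf, hρc⟩ := exists_smoothing p hp.le volume f hf π hε0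
  rw [hπ2] at hρi hρf
  rw [hπ1] at hρ1
  have hρcost : transportCost p ρ ≤ ENNReal.ofReal ((δ + ε + ε) ^ p) := by
    rw [← root (by positivity)]
    refine hρc.trans ((add_le_add_left hπc.le _).trans_eq ?_)
    rw [← ENNReal.ofReal_add (by positivity) (by positivity)]
  have hts : ENNReal.ofReal (1 - t) + ENNReal.ofReal t = 1 := by
    rw [← ENNReal.ofReal_add (by linarith) ht0.le]; simp
  set κ := ENNReal.ofReal (1 - t) • ρ + ENNReal.ofReal t • σ
  have hκ1 : κ.map Prod.fst = μ := by
    rw [Measure.map_add _ _ measurable_fst, Measure.map_smul, Measure.map_smul, hρ1, hσ1,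
      ← add_smul, hts, one_smul]
  have hκ2 : κ.map Prod.snd =
      ENNReal.ofReal (1 - t) • ρ.map Prod.snd + ENNReal.ofReal t • σ.map Prod.snd := by
    rw [Measure.map_add _ _ measurable_snd, Measure.map_smul, Measure.map_smul]
  have hκcost : transportCost p κ ≤ ENNReal.ofReal (δ ^ p) := by
    have : transportCost p κ =
        ENNReal.ofReal (1 - t) * transportCost p ρ + ENNReal.ofReal t * transportCost p σ := by
      simp [transportCost, κ, lintegral_add_measure, lintegral_smul_measure]
    rw [this]
    refine (add_le_add (mul_le_mul_right hρcost _) (mul_le_mul_right hσcost _)).trans ?_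
    rw [← ENNReal.ofReal_mul (by linarith), ← ENNReal.ofReal_mul ht0.le,
      ← ENNReal.ofReal_add (mul_nonneg (by linarith) (by positivity)) (by positivity)]
    exact ENNReal.ofReal_le_ofReal hεδ
  have : IsProbabilityMeasure κ := ⟨by simp [κ, hts]⟩
  refine ⟨κ.map Prod.snd, Measure.isProbabilityMeasure_map measurable_snd.aemeasurable, ?_, ?_, ?_⟩
  · rw [← hκ1]; exact Wp_le_of_coupling hp0 hδ.le κ hκcost
  · rw [hκ2]
    exact (hρac.smul_left _).add_left (hσac.smul_left _)
  · rw [hκ2]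
    by_cases hi : Integrable f ν
    · rw [integral_add_measure ((hρi.2 hi).smul_measure ENNReal.ofReal_ne_top)
        (hσi.smul_measure ENNReal.ofReal_ne_top), integral_smul_measure, integral_smul_measure,
        ENNReal.toReal_ofReal (by linarith), ENNReal.toReal_ofReal ht0.le, smul_eq_mul, smul_eq_mul]
      change |_ + t * A - I| ≤ η
      set R := ∫ x, f x ∂(ρ.map Prod.snd)
      have e : (1 - t) * R + t * A - I = (1 - t) * (R - I) + t * (A - I) := by ring
      rw [e]
      refine (abs_add_le _ _).trans ?_
      rw [abs_mul, abs_mul, abs_of_pos ht0, abs_of_pos (sub_pos.2 ht1)]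
      have h1 : (1 - t) * |R - I| ≤ η / 2 := by
        nlinarith [abs_nonneg (R - I)]
      have h2 : t * |A - I| ≤ t * (|A| + |I| + 1) :=
        mul_le_mul_of_nonneg_left (by linarith [abs_sub A I]) ht0.le
      linarith
    · have hI : I = 0 := integral_undef hi
      rw [hI, integral_undef]
      · simpa using hη.le
      · intro h
        refine hi (hρi.1 ?_)
        have := h.left_of_add_measure
        rwa [integrable_smul_measure (by simpa using ht1) ENNReal.ofReal_ne_top] at this

lemma csSup_eq_of_subset_of_approx {A B : Set ℝ} (hBA : B ⊆ A)
    (h : ∀ a ∈ A, ∀ η > 0, ∃ b ∈ B, |b - a| ≤ η) : sSup A = sSup B := by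
  rcases A.eq_empty_or_nonempty with rfl | ⟨a, ha⟩
  · rw [subset_empty_iff.1 hBA]
  obtain ⟨b₀, hb₀, -⟩ := h a ha 1 one_pos
  by_cases hB : BddAbove B
  · have hle : ∀ x ∈ A, x ≤ sSup B := by
      intro x hx
      refine le_of_forall_pos_le_add fun η hη => ?_
      obtain ⟨b, hb, hbx⟩ := h x hx η hη
      linarith [(abs_le.1 hbx).1, le_csSup hB hb]
    exact le_antisymm (csSup_le ⟨a, ha⟩ hle) (csSup_le_csSup ⟨_, hle⟩ ⟨b₀, hb₀⟩ hBA)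
  · rw [Real.sSup_of_not_bddAbove hB, Real.sSup_of_not_bddAbove fun hA => hB (hA.mono hBA)]

/-- If `μ` is absolutely continuous w.r.t. Lebesgue measure, the supremum of `∫ f dν`
over the Wasserstein ball is not changed by restricting to absolutely continuous `ν`. -/
theorem stmt10 {d : ℕ} (p : ℝ) (hp : 1 < p)
    (μ : Measure (EuclideanSpace ℝ (Fin d))) [IsProbabilityMeasure μ]
    (hac : μ ≪ (volume : Measure (EuclideanSpace ℝ (Fin d))))
    (hmom : Integrable (fun x => ‖x‖ ^ p) μ)
    (f : EuclideanSpace ℝ (Fin d) → ℝ) (hf : Continuous f)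
    (c : ℝ) (hb : ∀ x, f x ≤ c * (1 + ‖x‖ ^ p))
    (δ : ℝ) (hδ : 0 ≤ δ) :
    sSup {r : ℝ | ∃ ν : Measure (EuclideanSpace ℝ (Fin d)), IsProbabilityMeasure ν ∧
        Wp p μ ν ≤ ENNReal.ofReal δ ∧ r = ∫ x, f x ∂ν}
      = sSup {r : ℝ | ∃ ν : Measure (EuclideanSpace ℝ (Fin d)), IsProbabilityMeasure ν ∧
        Wp p μ ν ≤ ENNReal.ofReal δ ∧
        ν ≪ (volume : Measure (EuclideanSpace ℝ (Fin d))) ∧ r = ∫ x, f x ∂ν} := by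
  refine csSup_eq_of_subset_of_approx ?_ ?_
  · rintro r ⟨ν, h1, h2, -, h4⟩
    exact ⟨ν, h1, h2, h4⟩
  · rintro r ⟨ν, h1, h2, rfl⟩ η hη
    rcases hδ.eq_or_lt with rfl | hδ
    · obtain rfl : μ = ν := eq_of_Wp_eq_zero (zero_lt_one.trans hp) (by simpa using h2)
      exact ⟨_, ⟨μ, h1, h2, hac, rfl⟩, by simpa using hη.le⟩
    · obtain ⟨ν', k1, k2, k3, k4⟩ :=
        exists_absolutelyContinuous_integral_near hp μ hmom f hf hδ ν h2 hη
      exact ⟨_, ⟨ν', k1, k2, k3, rfl⟩, k4⟩
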